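/- Let p : ι → V where V is a module over ZMod 2, let H : D → Set ι, and let G be a simple graph on D × ι whose adjacency relation satisfies: whenever (i,j) and (i',j') are adjacent, i ≠ i' and (j = j' or (j ∈ H(i') and j' ∈ H(i))). Let Q be a finite clique of G and let P' be the image of Q under the second projection. Then for every (i,j) ∈ Q: (1) every j' ∈ P' with j' ≠ j satisfies j' ∈ H(i); and (2) p(j) = (Σ_{j' ∈ P'} p(j')) + (Σ_{j' ∈ P', j' ≠ j} p(j')). -/

import Mathlib

theorem image_snd_diff_singleton_subset_of_pairwise {D ι : Type*} {H : D → Set ι}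
    {Q : Set (D × ι)} (hQ : Q.Pairwise fun v w ↦ v.2 = w.2 ∨ w.2 ∈ H v.1)
    {v : D × ι} (hv : v ∈ Q) : Prod.snd '' Q \ {v.2} ⊆ H v.1 := by
  rintro _ ⟨⟨w, hw, rfl⟩, hne : w.2 ≠ v.2⟩
  have hvw : v ≠ w := fun h ↦ hne (congrArg Prod.snd h.symm)
  exact (hQ hv hw hvw).resolve_left hne.symm

section ZModTwo

variable {ι V : Type*} [AddCommGroup V] [Module (ZMod 2) V]

theorem sum_add_sum_filter_not_eq_sum_filter (s : Finset ι) (P : ι → Prop) [DecidablePred P]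
    (f : ι → V) : ∑ i ∈ s, f i + ∑ i ∈ s with ¬P i, f i = ∑ i ∈ s with P i, f i := by
  rw [← Finset.sum_filter_add_sum_filter_not s P f, add_assoc, ZModModule.add_self, add_zero]

theorem sum_add_sum_filter_ne_eq_of_mem [DecidableEq ι] {s : Finset ι} {a : ι} (ha : a ∈ s)
    (f : ι → V) : ∑ i ∈ s, f i + ∑ i ∈ s with i ≠ a, f i = f a := by
  rw [sum_add_sum_filter_not_eq_sum_filter s (· = a) f, Finset.filter_eq', if_pos ha,
    Finset.sum_singleton]

end ZModTwo

theorem stmt_4 {D ι V : Type*} [DecidableEq ι]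
    [AddCommGroup V] [Module (ZMod 2) V] (p : ι → V)
    (H : D → Set ι) (G : SimpleGraph (D × ι))
    (hG : ∀ v w : D × ι, G.Adj v w →
      v.1 ≠ w.1 ∧ (v.2 = w.2 ∨ (v.2 ∈ H w.1 ∧ w.2 ∈ H v.1)))
    (Q : Finset (D × ι)) (hclique : G.IsClique (↑Q : Set (D × ι))) :
    ∀ v ∈ Q,
      (∀ j' ∈ Q.image Prod.snd, j' ≠ v.2 → j' ∈ H v.1) ∧
      p v.2 = (∑ j' ∈ Q.image Prod.snd, p j') +
        ∑ j' ∈ (Q.image Prod.snd).filter (fun j' => j' ≠ v.2), p j' := by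
  intro v hv
  have hpairwise : (Q : Set (D × ι)).Pairwise fun v w ↦ v.2 = w.2 ∨ w.2 ∈ H v.1 :=
    hclique.imp fun v w hvw ↦ (hG v w hvw).2.imp_right And.right
  have hoverheard : Prod.snd '' (Q : Set (D × ι)) \ {v.2} ⊆ H v.1 :=
    image_snd_diff_singleton_subset_of_pairwise hpairwise hv
  have hwanted : v.2 ∈ Q.image Prod.snd := Finset.mem_image_of_mem Prod.snd hv
  exact ⟨fun j' hj' hne ↦ hoverheard ⟨Finset.mem_image.mp hj', hne⟩,
    (sum_add_sum_filter_ne_eq_of_mem hwanted p).symm⟩
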